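/- Let (X,Σ,m) be a probability measure space and B a Banach space. Then B is reflexive if and only if L^p(m;B) is reflexive for every p ∈ (1,∞). -/

import Mathlib

open MeasureTheory NormedSpace
open scoped ENNReal

section FunctionalAnalysis

variable {E : Type*} [NormedAddCommGroup E] [NormedSpace ℝ E]

/-- A continuous functional separates a point from a closed subspace not containing it. -/
theorem exists_strongDual_eq_zero_of_notMem {S : Submodule ℝ E} (hS : IsClosed (S : Set E)) {x : E}
    (hx : x ∉ S) : ∃ f : StrongDual ℝ E, (∀ y ∈ S, f y = 0) ∧ f x ≠ 0 := by
  obtain ⟨f, u, hfx, hfS⟩ := geometric_hahn_banach_point_closed S.convex hS hx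
  have hu : u < 0 := by simpa using hfS 0 S.zero_mem
  refine ⟨f, fun y hy => ?_, (hfx.trans hu).ne⟩
  by_contra hne
  have := hfS ((u / f y) • y) (S.smul_mem _ hy)
  simp [hne] at this

/-- A normed space is reflexive as soon as it is a closed subspace of a reflexive one. -/
theorem Submodule.surjective_inclusionInDoubleDual
    (h : Function.Surjective (inclusionInDoubleDual ℝ E)) {S : Submodule ℝ E}
    (hS : IsClosed (S : Set E)) : Function.Surjective (inclusionInDoubleDual ℝ S) := by
  intro φ
  obtain ⟨b, hb⟩ := h (φ.comp (ContinuousLinearMap.precomp ℝ S.subtypeL))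
  have hb' (f : StrongDual ℝ E) : f b = φ (f.comp S.subtypeL) := DFunLike.congr_fun hb f
  have hbS : b ∈ S := by
    by_contra hx
    obtain ⟨f, hf, hfb⟩ := exists_strongDual_eq_zero_of_notMem hS hx
    have : f.comp S.subtypeL = 0 := by ext y; exact hf y y.2
    exact hfb (by rw [hb', this, map_zero])
  refine ⟨⟨b, hbS⟩, ?_⟩
  ext f
  obtain ⟨g, hg, -⟩ := exists_extension_norm_eq S f
  have : g.comp S.subtypeL = f := by ext y; exact hg y
  rw [dual_def, ← hg, hb', this]

theorem sub_mem_closure_of_mem {S : Submodule ℝ E} {x y : E} (hx : x ∈ S)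
    (hy : y ∈ closure (S : Set E)) : x - y ∈ closure (S : Set E) :=
  S.topologicalClosure.sub_mem (S.le_topologicalClosure hx) hy

theorem exists_mem_norm_sub_lt_of_mem_closure {E : Type*} [NormedAddCommGroup E] {S : Set E}
    {x : E} (hx : x ∈ closure S) {δ : ℝ} (hδ : 0 < δ) :
    ∃ y ∈ S, ‖y - x‖ < δ ∧ ‖x‖ ≤ ‖y‖ + ‖y - x‖ := by
  obtain ⟨y, hy, hxy⟩ := Metric.mem_closure_iff.1 hx δ hδ
  refine ⟨y, hy, by rwa [← dist_eq_norm, dist_comm], ?_⟩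
  simpa [norm_sub_rev] using norm_le_norm_add_norm_sub' x y

/-- A functional almost attains half of its norm on the closed unit ball. -/
theorem exists_norm_le_one_half_norm_le (f : StrongDual ℝ E) :
    ∃ x : E, ‖x‖ ≤ 1 ∧ ‖f‖ / 2 ≤ ‖f x‖ := by
  rcases (norm_nonneg f).eq_or_lt with h | h
  · exact ⟨0, by simp, by simp [← h]⟩
  · obtain ⟨x, hx, hfx⟩ := f.exists_lt_apply_of_lt_opNorm (half_lt_self h)
    exact ⟨x, hx.le, hfx.le⟩

/-- A normed space with separable dual is separable. -/
theorem separableSpace_of_separableSpace_strongDual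
    [TopologicalSpace.SeparableSpace (StrongDual ℝ E)] : TopologicalSpace.SeparableSpace E := by
  choose e he hfe using exists_norm_le_one_half_norm_le (E := E)
  let r := TopologicalSpace.denseSeq (StrongDual ℝ E)
  let S := (Submodule.span ℝ (Set.range (fun n => e (r n)))).topologicalClosure
  have hS : S = ⊤ := by
    by_contra hne
    obtain ⟨x, hx⟩ : ∃ x, x ∉ S := by
      by_contra! hall
      exact hne (Submodule.eq_top_iff'.2 hall)
    obtain ⟨f, hf, hfx⟩ :=
      exists_strongDual_eq_zero_of_notMem (Submodule.isClosed_topologicalClosure _) hx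
    have hf0 : 0 < ‖f‖ := norm_pos_iff.2 (by rintro rfl; simp at hfx)
    obtain ⟨n, hn⟩ := (TopologicalSpace.denseRange_denseSeq (StrongDual ℝ E)).exists_dist_lt f
      (by positivity : 0 < ‖f‖ / 4)
    have h1 : f (e (r n)) = 0 :=
      hf _ (Submodule.le_topologicalClosure _ (Submodule.subset_span ⟨n, rfl⟩))
    have h2 : ‖(r n - f) (e (r n))‖ ≤ ‖r n - f‖ * 1 :=
      (r n - f).le_opNorm_of_le (he _)
    rw [sub_apply, h1, sub_zero] at h2
    have h3 : ‖r n - f‖ < ‖f‖ / 4 := by rwa [← dist_eq_norm, dist_comm]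
    have h4 : ‖f‖ ≤ ‖r n‖ + ‖r n - f‖ := by
      simpa [norm_sub_rev] using norm_le_norm_add_norm_sub' f (r n)
    linarith [hfe (r n)]
  have hsep : TopologicalSpace.IsSeparable (S : Set E) :=
    (Set.countable_range _).isSeparable.span.closure
  rw [hS] at hsep
  exact TopologicalSpace.isSeparable_univ_iff.1 (by simpa using hsep)

/-- A form of Helly's theorem: an element of the double dual is approximated on finitely many
functionals by a vector of no larger norm. -/
theorem exists_norm_le_forall_abs_sub_lt (Φ : StrongDual ℝ (StrongDual ℝ E))
    (S : Finset (StrongDual ℝ E)) {ε : ℝ} (hε : 0 < ε) :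
    ∃ x : E, ‖x‖ ≤ ‖Φ‖ ∧ ∀ f ∈ S, |f x - Φ f| < ε := by
  classical
  let T : E →L[ℝ] (S → ℝ) := ContinuousLinearMap.pi fun f => f.1
  let C := closure (T '' Metric.closedBall 0 ‖Φ‖)
  have hC : Convex ℝ C := ((convex_closedBall _ _).linear_image T.toLinearMap).closure
  have hmem : (fun f : S => Φ f.1) ∈ C := by
    by_contra hnot
    obtain ⟨l, u, hlu, hul⟩ := geometric_hahn_banach_closed_point hC isClosed_closure hnot
    have hl : l (fun f : S => Φ f.1) = Φ (l.comp T) := by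
      have h1 (v : S → ℝ) : l v = ∑ i, v i * l (fun j => if i = j then 1 else 0) := by
        simpa using LinearMap.pi_apply_eq_sum_univ l.toLinearMap v
      have h2 : l.comp T = ∑ i : S, l (fun j => if i = j then 1 else 0) • i.1 := by
        ext x
        simp only [ContinuousLinearMap.comp_apply, h1 (T x), sum_apply,
          smul_apply, smul_eq_mul]
        exact Finset.sum_congr rfl fun i _ => mul_comm _ _
      rw [h1, h2, map_sum]
      exact Finset.sum_congr rfl fun i _ => by simp [mul_comm]
    have hball (x : E) (hx : ‖x‖ ≤ ‖Φ‖) : l (T x) < u :=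
      hlu _ (subset_closure ⟨x, by simpa using hx, rfl⟩)
    have hu : 0 < u := by simpa using hball 0 (norm_zero.trans_le (norm_nonneg Φ))
    have hle : Φ (l.comp T) ≤ u := by
      rcases (norm_nonneg Φ).eq_or_lt with h | h
      · have h0 : Φ (l.comp T) ≤ ‖Φ‖ * ‖l.comp T‖ := (le_abs_self _).trans (Φ.le_opNorm _)
        rw [← h, zero_mul] at h0
        exact h0.trans hu.le
      have hn : ‖l.comp T‖ ≤ u / ‖Φ‖ := by
        refine ContinuousLinearMap.opNorm_le_bound _ (by positivity) fun x => ?_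
        rcases (norm_nonneg x).eq_or_lt with hx | hx
        · simp [norm_eq_zero.1 hx.symm]
        have hy : ‖(‖Φ‖ / ‖x‖) • x‖ ≤ ‖Φ‖ := by
          rw [norm_smul, Real.norm_of_nonneg (by positivity), div_mul_cancel₀ _ hx.ne']
        have h1 := hball _ hy
        have h2 := hball (-((‖Φ‖ / ‖x‖) • x)) (by rwa [norm_neg])
        simp only [map_neg, map_smul, smul_eq_mul] at h1 h2
        have h3 : ‖Φ‖ / ‖x‖ * |l (T x)| ≤ u := by
          rcases abs_cases (l (T x)) with ⟨h, -⟩ | ⟨h, -⟩ <;> rw [h] <;> linarith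
        rw [ContinuousLinearMap.comp_apply, Real.norm_eq_abs, div_mul_eq_mul_div,
          le_div_iff₀ h]
        rw [div_mul_eq_mul_div, div_le_iff₀ hx] at h3
        linarith
      calc Φ (l.comp T) ≤ ‖Φ‖ * ‖l.comp T‖ := (le_abs_self _).trans (Φ.le_opNorm _)
        _ ≤ ‖Φ‖ * (u / ‖Φ‖) := by gcongr
        _ = u := by field_simp
    linarith
  obtain ⟨_, ⟨x, hx, rfl⟩, hdist⟩ := Metric.mem_closure_iff.1 hmem ε hε
  refine ⟨x, by simpa using hx, fun f hf => ?_⟩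
  have := (dist_pi_lt_iff hε).1 hdist ⟨f, hf⟩
  rwa [dist_comm, Real.dist_eq] at this

/-- **Eberlein–Šmulian type criterion**: a normed space is reflexive if every bounded sequence
converges weakly along some fixed ultrafilter. -/
theorem surjective_inclusionInDoubleDual_of_seq (U : Filter ℕ) [U.NeBot] (hU : U ≤ Filter.atTop)
    (h : ∀ u : ℕ → E, ∀ C, (∀ n, ‖u n‖ ≤ C) →
      ∃ w : E, ∀ f : StrongDual ℝ E, Filter.Tendsto (fun n => f (u n)) U (nhds (f w))) :
    Function.Surjective (inclusionInDoubleDual ℝ E) := by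
  classical
  intro Φ
  choose x hx hxf using fun (S : Finset (StrongDual ℝ E)) (k : ℕ) =>
    exists_norm_le_forall_abs_sub_lt Φ S (Nat.one_div_pos_of_nat (α := ℝ) (n := k))
  choose e he hfe using exists_norm_le_one_half_norm_le (E := StrongDual ℝ E)
  let D (F : Set (StrongDual ℝ E)) : Set E := {y | ∃ S : Finset (StrongDual ℝ E), ↑S ⊆ F ∧
    ∃ k, x S k = y}
  have hD {F : Set (StrongDual ℝ E)} (hF : F.Countable) : (D F).Countable := by
    have : D F = ⋃ S ∈ {S : Finset (StrongDual ℝ E) | ↑S ⊆ F}, Set.range (x S) := by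
      ext y; simp [D]
    rw [this]
    refine Set.Countable.biUnion ?_ fun S _ => Set.countable_range _
    refine ((Set.countable_ofPred_finite_subset hF).preimage
      Finset.coe_injective).mono fun S hS => And.intro S.finite_toSet hS
  let M (F : Set (StrongDual ℝ E)) : Submodule ℝ (StrongDual ℝ (StrongDual ℝ E)) :=
    Submodule.span ℝ (insert Φ (inclusionInDoubleDual ℝ E '' D F))
  have hW (F : Set (StrongDual ℝ E)) : ∃ W : Set (StrongDual ℝ (StrongDual ℝ E)),
      F.Countable → W.Countable ∧ (M F : Set _) ⊆ closure W := by
    by_cases hF : F.Countable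
    · obtain ⟨W, hW, hMW⟩ := (((hD hF).image (inclusionInDoubleDual ℝ E)).insert Φ).isSeparable.span
        (R := ℝ)
      exact ⟨W, fun _ => ⟨hW, hMW⟩⟩
    · exact ⟨∅, fun h => absurd h hF⟩
  choose W hW using hW
  let G : ℕ → Set (StrongDual ℝ E) := fun n => Nat.rec {0} (fun _ F => F ∪ e '' W F) n
  have hGsucc (n : ℕ) : G (n + 1) = G n ∪ e '' W (G n) := rfl
  have hGc (n : ℕ) : (G n).Countable := by
    induction n with
    | zero => exact Set.countable_singleton 0
    | succ n ih => rw [hGsucc]; exact ih.union ((hW _ ih).1.image e)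
  have hGm : Monotone G := monotone_nat_of_le_succ fun n => by
    rw [hGsucc]; exact Set.subset_union_left
  have hDm {F F' : Set (StrongDual ℝ E)} (hF : F ⊆ F') : D F ⊆ D F' := by
    rintro y ⟨S, hS, k, rfl⟩
    exact ⟨S, hS.trans hF, k, rfl⟩
  let F := ⋃ n, G n
  have hFc : F.Countable := Set.countable_iUnion hGc
  have hFne : F.Nonempty := ⟨0, Set.mem_iUnion.2 ⟨0, rfl⟩⟩
  have hMF : (M F : Set (StrongDual ℝ (StrongDual ℝ E))) ⊆ ⋃ n, ↑(M (G n)) := by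
    have hdir : Directed (· ≤ ·) fun n => M (G n) := by
      refine Monotone.directed_le fun i j hij => Submodule.span_mono ?_
      exact Set.insert_subset_insert (Set.image_mono (hDm (hGm hij)))
    rw [← Submodule.coe_iSup_of_directed _ hdir]
    refine Submodule.span_le.2 (Set.insert_subset ?_ ?_)
    · exact Submodule.mem_iSup_of_mem 0 (Submodule.subset_span (Set.mem_insert _ _))
    · rintro _ ⟨y, ⟨S, hS, k, rfl⟩, rfl⟩
      obtain ⟨n, hn⟩ := hGm.directed_le.exists_mem_subset_of_finset_subset_biUnion hS
      exact Submodule.mem_iSup_of_mem n (Submodule.subset_span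
        (Set.mem_insert_of_mem _ ⟨_, ⟨S, hn, k, rfl⟩, rfl⟩))
  obtain ⟨f, hf⟩ := hFc.exists_eq_range hFne
  let u (n : ℕ) : E := x ((Finset.range (n + 1)).image f) n
  have huD (n : ℕ) : u n ∈ D F := ⟨_, by simp [hf], n, rfl⟩
  obtain ⟨w, hw⟩ := h u ‖Φ‖ fun n => hx _ _
  have hwf (i : ℕ) : f i w = Φ (f i) := by
    refine tendsto_nhds_unique (hw (f i)) (Filter.Tendsto.mono_left ?_ hU)
    rw [tendsto_iff_dist_tendsto_zero]
    refine squeeze_zero' (.of_forall fun _ => dist_nonneg) ?_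
      tendsto_one_div_add_atTop_nhds_zero_nat
    filter_upwards [Filter.eventually_ge_atTop i] with n hn
    rw [Real.dist_eq]
    refine (hxf _ n (f i) (Finset.mem_image_of_mem f ?_)).le
    simpa using Nat.lt_succ_of_le hn
  have hwS : w ∈ (Submodule.span ℝ (D F)).topologicalClosure := by
    by_contra hnot
    obtain ⟨g, hg, hgw⟩ :=
      exists_strongDual_eq_zero_of_notMem (Submodule.isClosed_topologicalClosure _) hnot
    refine hgw (tendsto_nhds_unique (hw g) ?_)
    have (n : ℕ) : g (u n) = 0 :=
      hg _ (Submodule.le_topologicalClosure _ (Submodule.subset_span (huD n)))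
    simp [this]
  let z := Φ - inclusionInDoubleDual ℝ E w
  have hzM : z ∈ closure (M F : Set (StrongDual ℝ (StrongDual ℝ E))) := by
    refine sub_mem_closure_of_mem (E := StrongDual ℝ (StrongDual ℝ E)) (S := M F)
      (Submodule.subset_span (Set.mem_insert _ _)) ?_
    have := map_mem_closure (inclusionInDoubleDual ℝ E).continuous hwS
      (t := (M F : Set (StrongDual ℝ (StrongDual ℝ E)))) (fun y hy => ?_)
    · exact this
    · exact Submodule.span_mono (Set.subset_insert _ _)
        (Submodule.map_span (inclusionInDoubleDual ℝ E).toLinearMap _ ▸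
          Submodule.mem_map_of_mem hy)
  have hz0 (δ : ℝ) (hδ : 0 < δ) : ‖z‖ ≤ 3 * δ := by
    have hzW : z ∈ closure (⋃ n, W (G n)) := by
      refine closure_minimal (hMF.trans (Set.iUnion_subset fun n => ?_)) isClosed_closure hzM
      exact ((hW _ (hGc n)).2).trans (closure_mono (Set.subset_iUnion (fun n => W (G n)) n))
    obtain ⟨z', hz', h3, h4⟩ := exists_mem_norm_sub_lt_of_mem_closure
      (E := StrongDual ℝ (StrongDual ℝ E)) hzW hδ
    obtain ⟨n, hn⟩ := Set.mem_iUnion.1 hz'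
    have heF : e z' ∈ F := Set.mem_iUnion.2 ⟨n + 1, Or.inr ⟨z', hn, rfl⟩⟩
    rw [hf] at heF
    obtain ⟨i, hi⟩ := heF
    have hz1 : z (e z') = 0 := by simp [z, ← hi, hwf]
    have h2 : ‖(z' - z) (e z')‖ ≤ ‖z' - z‖ * 1 := (z' - z).le_opNorm_of_le (he _)
    rw [sub_apply, hz1, sub_zero] at h2
    linarith [hfe z']
  have hz : ‖z‖ ≤ 0 := by
    refine le_of_forall_pos_le_add fun ε hε => ?_
    linarith [hz0 (ε / 3) (by positivity)]
  exact ⟨w, (sub_eq_zero.1 (norm_le_zero_iff.1 hz)).symm⟩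

end FunctionalAnalysis

section DualOfBochner

variable {X : Type*} [MeasurableSpace X] {m : Measure X}

/-- A converse to Hölder's inequality, tested on simple functions. -/
theorem lintegral_rpow_le_of_forall_simpleFunc [IsFiniteMeasure m] {P Q : ℝ}
    (hPQ : P.HolderConjugate Q) {k : X → ℝ≥0∞} {C : ℝ≥0∞}
    (h : ∀ φ : SimpleFunc X NNReal,
      ∫⁻ x, φ x * k x ∂m ≤ C * (∫⁻ x, (φ x : ℝ≥0∞) ^ P ∂m) ^ (1 / P)) :
    ∫⁻ x, k x ^ Q ∂m ≤ C ^ Q := by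
  have hP := hPQ.pos
  have hQ := hPQ.symm.pos
  rw [lintegral_eq_nnreal]
  refine iSup₂_le fun ψ hψ => ?_
  rw [← SimpleFunc.lintegral_eq_lintegral]
  change ∫⁻ x, (ψ x : ℝ≥0∞) ∂m ≤ C ^ Q
  have hI : ∫⁻ x, (ψ x : ℝ≥0∞) ∂m ≠ ∞ := by
    obtain ⟨K, hK⟩ := ψ.finite_range.bddAbove
    exact (IsFiniteMeasure.lintegral_lt_top_of_bounded_to_ennreal m
      ⟨K, fun x => ENNReal.coe_le_coe.2 (hK ⟨x, rfl⟩)⟩).ne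
  set I := ∫⁻ x, (ψ x : ℝ≥0∞) ∂m with hIdef
  have h1 := h (ψ.map fun t => t ^ (1 / P))
  have h2 (x : X) : (((ψ.map fun t => t ^ (1 / P)) x : NNReal) : ℝ≥0∞) =
      (ψ x : ℝ≥0∞) ^ (1 / P) := by
    simp [ENNReal.coe_rpow_of_nonneg _ (inv_pos.2 hP).le]
  simp only [h2, ← ENNReal.rpow_mul, one_div_mul_cancel hP.ne', ENNReal.rpow_one, ← hIdef] at h1
  have h3 : I ≤ C * I ^ (1 / P) := by
    refine le_trans (lintegral_mono fun x => ?_) h1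
    calc (ψ x : ℝ≥0∞) = (ψ x : ℝ≥0∞) ^ (1 / P) * (ψ x : ℝ≥0∞) ^ (1 / Q) := by
          rw [← ENNReal.rpow_add_of_nonneg _ _ (by positivity) (by positivity), one_div, one_div,
            hPQ.inv_add_inv_eq_one, ENNReal.rpow_one]
      _ ≤ (ψ x : ℝ≥0∞) ^ (1 / P) * (k x ^ Q) ^ (1 / Q) := by gcongr; exact hψ x
      _ = (ψ x : ℝ≥0∞) ^ (1 / P) * k x := by
          rw [← ENNReal.rpow_mul, mul_one_div_cancel hQ.ne', ENNReal.rpow_one]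
  rcases eq_or_ne I 0 with h0 | h0
  · simp [h0]
  have h4 : I ^ (1 / Q) ≤ C := by
    have h5 : I ^ (1 / P) ≠ 0 := by simp [h0, hI]
    have h6 : I ^ (1 / P) ≠ ∞ := by simp [h0, hI]
    refine (ENNReal.mul_le_mul_iff_left h5 h6).1 ?_
    calc I ^ (1 / Q) * I ^ (1 / P) = I := by
          rw [← ENNReal.rpow_add_of_nonneg _ _ (by positivity) (by positivity), one_div, one_div,
            add_comm, hPQ.inv_add_inv_eq_one, ENNReal.rpow_one]
      _ ≤ _ := h3
  calc I = (I ^ (1 / Q)) ^ Q := by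
        rw [← ENNReal.rpow_mul, one_div_mul_cancel hQ.ne', ENNReal.rpow_one]
    _ ≤ C ^ Q := by gcongr

theorem integrable_simpleFunc_mul (φ : SimpleFunc X ℝ) {k : X → ℝ} (hk : Integrable k m) :
    Integrable (fun x => φ x * k x) m := by
  obtain ⟨C, hC⟩ := φ.exists_forall_norm_le
  exact hk.bdd_mul φ.stronglyMeasurable.aestronglyMeasurable (.of_forall hC)

variable {E : Type*} [NormedAddCommGroup E] {p : ℝ≥0∞}

theorem memLp_indicator_const [IsFiniteMeasure m] {A : Set X} (hA : MeasurableSet A) (e : E) :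
    MemLp (A.indicator fun _ => e) p m :=
  MeasureTheory.memLp_indicator_const p hA e (.inr (measure_ne_top m A))

variable [NormedSpace ℝ E]

theorem memLp_simpleFunc_smul [IsFiniteMeasure m] (φ : SimpleFunc X ℝ) {s : X → E}
    (hs : StronglyMeasurable s) (hs1 : ∀ x, ‖s x‖ ≤ 1) : MemLp (fun x => φ x • s x) p m := by
  refine (φ.memLp_of_isFiniteMeasure p m).mono
    (φ.stronglyMeasurable.smul hs).aestronglyMeasurable (.of_forall fun x => ?_)
  rw [norm_smul]
  exact mul_le_of_le_one_right (norm_nonneg _) (hs1 x)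

variable [Fact (1 ≤ p)]

open Classical in
/-- The value of a functional on `L^p` at a function, with value `0` outside of `L^p`. -/
noncomputable def evalMemLp (f : StrongDual ℝ (Lp E p m)) (u : X → E) : ℝ :=
  if h : MemLp u p m then f h.toLp else 0

theorem evalMemLp_eq (f : StrongDual ℝ (Lp E p m)) {u : X → E} (h : MemLp u p m) :
    evalMemLp f u = f h.toLp := dif_pos h

theorem evalMemLp_zero (f : StrongDual ℝ (Lp E p m)) : evalMemLp f (fun _ => 0) = 0 :=
  (evalMemLp_eq f MemLp.zero).trans (map_zero f)

theorem evalMemLp_add (f : StrongDual ℝ (Lp E p m)) {u v : X → E} (hu : MemLp u p m)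
    (hv : MemLp v p m) : evalMemLp f (u + v) = evalMemLp f u + evalMemLp f v := by
  rw [evalMemLp_eq f hu, evalMemLp_eq f hv, evalMemLp_eq f (hu.add hv), MemLp.toLp_add, map_add]

theorem evalMemLp_const_smul (f : StrongDual ℝ (Lp E p m)) {u : X → E} (hu : MemLp u p m) (c : ℝ) :
    evalMemLp f (c • u) = c * evalMemLp f u := by
  rw [evalMemLp_eq f hu, evalMemLp_eq f (hu.const_smul c), MemLp.toLp_const_smul, map_smul,
    smul_eq_mul]

theorem abs_evalMemLp_le (f : StrongDual ℝ (Lp E p m)) {u : X → E} (hu : MemLp u p m) :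
    |evalMemLp f u| ≤ ‖f‖ * (eLpNorm u p m).toReal := by
  rw [evalMemLp_eq f hu]
  simpa using f.le_opNorm hu.toLp

variable [IsFiniteMeasure m]

theorem evalMemLp_indicator_union (f : StrongDual ℝ (Lp E p m)) (e : E) {A A' : Set X}
    (hA : MeasurableSet A) (hA' : MeasurableSet A') (h : Disjoint A A') :
    evalMemLp f ((A ∪ A').indicator fun _ => e) =
      evalMemLp f (A.indicator fun _ => e) + evalMemLp f (A'.indicator fun _ => e) := by
  rw [Set.indicator_union_of_disjoint h, ← evalMemLp_add f (memLp_indicator_const hA e)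
    (memLp_indicator_const hA' e)]
  rfl

theorem evalMemLp_indicator_biUnion (f : StrongDual ℝ (Lp E p m)) (e : E) {A : ℕ → Set X}
    (hA : ∀ i, MeasurableSet (A i)) (hd : Pairwise (Function.onFun Disjoint A)) (s : Finset ℕ) :
    evalMemLp f ((⋃ i ∈ s, A i).indicator fun _ => e) =
      ∑ i ∈ s, evalMemLp f ((A i).indicator fun _ => e) := by
  classical
  induction s using Finset.induction_on with
  | empty => simpa using evalMemLp_zero f
  | insert i s hi ih =>
    rw [Finset.set_biUnion_insert, evalMemLp_indicator_union f e (hA i)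
      (s.measurableSet_biUnion fun j _ => hA j) ?_, Finset.sum_insert hi, ih]
    exact Set.disjoint_iUnion₂_right.2 fun j hj => hd (by rintro rfl; exact hi hj)

theorem tendsto_measure_iUnion_compl_finset {A : ℕ → Set X} (hA : ∀ i, MeasurableSet (A i))
    (hd : Pairwise (Function.onFun Disjoint A)) :
    Filter.Tendsto (fun s : Finset ℕ => m ((⋃ i, A i) \ ⋃ i ∈ s, A i)) Filter.atTop (nhds 0) := by
  have h : ∑' i, m (A i) ≠ ∞ := by
    rw [← measure_iUnion hd hA]; exact measure_ne_top _ _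
  refine tendsto_of_tendsto_of_tendsto_of_le_of_le tendsto_const_nhds
    (ENNReal.tendsto_tsum_compl_atTop_zero h) (fun _ => bot_le) fun s => ?_
  refine (measure_mono ?_).trans (measure_iUnion_le fun i : {i // i ∉ s} => A i)
  rintro x ⟨hx, hxs⟩
  obtain ⟨i, hi⟩ := Set.mem_iUnion.1 hx
  refine Set.mem_iUnion.2 ⟨⟨i, fun his => hxs ?_⟩, hi⟩
  exact Set.mem_biUnion his hi

open Classical in
/-- The signed measure `A ↦ f (1_A e)` attached to a functional on `L^p` and a vector `e`. -/
noncomputable def signedMeasureOfDual (hp : p ≠ ∞) (f : StrongDual ℝ (Lp E p m)) (e : E) :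
    SignedMeasure X where
  measureOf' A := if MeasurableSet A then evalMemLp f (A.indicator fun _ => e) else 0
  empty' := by
    simpa using evalMemLp_zero f
  not_measurable' A hA := if_neg hA
  m_iUnion' A hA hd := by
    have hU := MeasurableSet.iUnion hA
    simp only [hA, hU, if_true]
    have hp0 : 0 < p.toReal := ENNReal.toReal_pos (zero_lt_one.trans_le Fact.out).ne' hp
    have hb (s : Finset ℕ) : MeasurableSet (⋃ i ∈ s, A i) := s.measurableSet_biUnion fun j _ => hA j
    rw [HasSum, SummationFilter.unconditional_filter, tendsto_iff_dist_tendsto_zero]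
    have hlim : Filter.Tendsto (fun s : Finset ℕ =>
        ‖f‖ * (‖e‖ₑ * m ((⋃ i, A i) \ ⋃ i ∈ s, A i) ^ (1 / p.toReal)).toReal)
        Filter.atTop (nhds 0) := by
      have h1 := ((tendsto_measure_iUnion_compl_finset (m := m) hA hd).ennrpow_const (1 / p.toReal))
      rw [ENNReal.zero_rpow_of_pos (by positivity)] at h1
      have h2 := ENNReal.Tendsto.const_mul (a := ‖e‖ₑ) h1 (.inr enorm_ne_top)
      rw [mul_zero] at h2
      have h3 := ((ENNReal.tendsto_toReal ENNReal.zero_ne_top).comp h2).const_mul ‖f‖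
      simpa using h3
    refine squeeze_zero (fun _ => dist_nonneg) (fun s => ?_) hlim
    have hsplit := evalMemLp_indicator_union f e (hb s) (hU.diff (hb s)) Set.disjoint_sdiff_right
    rw [Set.union_sdiff_cancel (Set.iUnion₂_subset fun i _ => Set.subset_iUnion A i),
      evalMemLp_indicator_biUnion f e hA hd] at hsplit
    rw [hsplit, dist_comm, Real.dist_eq, add_sub_cancel_left]
    refine (abs_evalMemLp_le f (memLp_indicator_const (hU.diff (hb s)) e)).trans_eq ?_
    rw [eLpNorm_indicator_const (hU.diff (hb s)) (zero_lt_one.trans_le Fact.out).ne' hp]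

theorem signedMeasureOfDual_apply (hp : p ≠ ∞) (f : StrongDual ℝ (Lp E p m)) (e : E) {A : Set X}
    (hA : MeasurableSet A) :
    signedMeasureOfDual hp f e A = evalMemLp f (A.indicator fun _ => e) := if_pos hA

theorem exists_density (hp : p ≠ ∞) (f : StrongDual ℝ (Lp E p m)) (e : E) :
    ∃ g : X → ℝ, Measurable g ∧ Integrable g m ∧
      ∀ A, MeasurableSet A → evalMemLp f (A.indicator fun _ => e) = ∫ x in A, g x ∂m := by
  have hac : signedMeasureOfDual hp f e ≪ᵥ m.toENNRealVectorMeasure := by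
    refine VectorMeasure.AbsolutelyContinuous.mk fun A hA hmA => ?_
    rw [Measure.toENNRealVectorMeasure_apply_measurable hA] at hmA
    rw [signedMeasureOfDual_apply hp f e hA]
    have h := abs_evalMemLp_le f (memLp_indicator_const (m := m) (p := p) hA e)
    have hp0 : 0 < p.toReal := ENNReal.toReal_pos (zero_lt_one.trans_le Fact.out).ne' hp
    rw [eLpNorm_indicator_const hA (zero_lt_one.trans_le Fact.out).ne' hp, hmA,
      ENNReal.zero_rpow_of_pos (by positivity)] at h
    simpa using h
  refine ⟨(signedMeasureOfDual hp f e).rnDeriv m, SignedMeasure.measurable_rnDeriv _ _,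
    SignedMeasure.integrable_rnDeriv _ _, fun A hA => ?_⟩
  rw [← signedMeasureOfDual_apply hp f e hA,
    ← withDensityᵥ_apply (SignedMeasure.integrable_rnDeriv _ _) hA,
    SignedMeasure.withDensityᵥ_rnDeriv_eq _ _ hac]

/-- `s` is a measurable selection in the unit ball of `E`, against which `f` has density `k`. -/
structure HasDensity (f : StrongDual ℝ (Lp E p m)) (s : X → E) (k : X → ℝ) : Prop where
  stronglyMeasurable : StronglyMeasurable s
  norm_le : ∀ x, ‖s x‖ ≤ 1
  measurable : Measurable k
  integrable : Integrable k m
  eval_smul : ∀ φ : SimpleFunc X ℝ, evalMemLp f (fun x => φ x • s x) = ∫ x, φ x * k x ∂m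

theorem HasDensity.of_const (f : StrongDual ℝ (Lp E p m)) {e : E} (he : ‖e‖ ≤ 1) {k : X → ℝ}
    (hk : Measurable k) (hki : Integrable k m)
    (h : ∀ A, MeasurableSet A → evalMemLp f (A.indicator fun _ => e) = ∫ x in A, k x ∂m) :
    HasDensity f (fun _ => e) k where
  stronglyMeasurable := stronglyMeasurable_const
  norm_le _ := he
  measurable := hk
  integrable := hki
  eval_smul φ := by
    induction φ using SimpleFunc.induction with
    | const c hA =>
      rename_i A
      have h1 : (fun x => (SimpleFunc.piecewise A hA (SimpleFunc.const X c)
          (SimpleFunc.const X 0)) x • e) = c • A.indicator fun _ => e := by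
        ext x
        by_cases hx : x ∈ A <;> simp [hx]
      have h2 : (fun x => (SimpleFunc.piecewise A hA (SimpleFunc.const X c)
          (SimpleFunc.const X 0)) x * k x) = fun x => c * A.indicator k x := by
        ext x
        by_cases hx : x ∈ A <;> simp [hx]
      rw [h1, h2, evalMemLp_const_smul f (memLp_indicator_const hA e), h A hA,
        integral_const_mul, integral_indicator hA]
    | add hd hφ hψ =>
      rename_i φ ψ
      have h1 : (fun x => (φ + ψ) x • e) = (fun x => φ x • e) + fun x => ψ x • e := by
        ext x; simp [add_smul]
      rw [h1, evalMemLp_add f (memLp_simpleFunc_smul φ stronglyMeasurable_const fun _ => he)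
        (memLp_simpleFunc_smul ψ stronglyMeasurable_const fun _ => he), hφ, hψ,
        ← integral_add (integrable_simpleFunc_mul φ hki) (integrable_simpleFunc_mul ψ hki)]
      simp [add_mul]

theorem HasDensity.max {f : StrongDual ℝ (Lp E p m)} {s s' : X → E} {k k' : X → ℝ}
    (h : HasDensity f s k) (h' : HasDensity f s' k') :
    ∃ t, HasDensity f t (fun x => max (k x) (k' x)) := by
  classical
  let A := {x | k' x ≤ k x}
  have hA : MeasurableSet A := measurableSet_le h'.measurable h.measurable
  have hdec : DecidablePred (· ∈ A) := Classical.decPred _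
  refine ⟨A.piecewise s s', h.stronglyMeasurable.piecewise hA h'.stronglyMeasurable, fun x => ?_,
    h.measurable.max h'.measurable,
    h.integrable.sup h'.integrable, fun φ => ?_⟩
  · by_cases hx : x ∈ A
    · simpa [hx] using h.norm_le x
    · simpa [hx] using h'.norm_le x
  · let φ₁ := φ.piecewise A hA 0
    let φ₂ := SimpleFunc.piecewise A hA 0 φ
    have h1 : (fun x => φ x • A.piecewise s s' x) =
        (fun x => φ₁ x • s x) + fun x => φ₂ x • s' x := by
      ext x
      by_cases hx : x ∈ A <;> simp [φ₁, φ₂, hx]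
    have h2 : (fun x => φ x * Max.max (k x) (k' x)) = fun x => φ₁ x * k x + φ₂ x * k' x := by
      ext x
      by_cases hx : x ∈ A
      · simp [φ₁, φ₂, hx, max_eq_left (show k' x ≤ k x from hx)]
      · simp [φ₁, φ₂, hx, max_eq_right (le_of_not_ge hx : k x ≤ k' x)]
    rw [h1, h2, evalMemLp_add f (memLp_simpleFunc_smul φ₁ h.stronglyMeasurable h.norm_le)
      (memLp_simpleFunc_smul φ₂ h'.stronglyMeasurable h'.norm_le), h.eval_smul, h'.eval_smul,
      integral_add (integrable_simpleFunc_mul φ₁ h.integrable)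
        (integrable_simpleFunc_mul φ₂ h'.integrable)]

theorem HasDensity.lintegral_mul_le (hp : p ≠ ∞) {f : StrongDual ℝ (Lp E p m)} {s : X → E}
    {k : X → ℝ} (h : HasDensity f s k) (hk : 0 ≤ k) (φ : SimpleFunc X NNReal) :
    ∫⁻ x, φ x * ENNReal.ofReal (k x) ∂m ≤
      ‖f‖ₑ * (∫⁻ x, (φ x : ℝ≥0∞) ^ p.toReal ∂m) ^ (1 / p.toReal) := by
  let ψ : SimpleFunc X ℝ := φ.map NNReal.toReal
  have hψ := memLp_simpleFunc_smul (p := p) (m := m) ψ h.stronglyMeasurable h.norm_le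
  have h1 : ∫⁻ x, φ x * ENNReal.ofReal (k x) ∂m = ENNReal.ofReal (∫ x, ψ x * k x ∂m) := by
    rw [ofReal_integral_eq_lintegral_ofReal (integrable_simpleFunc_mul ψ h.integrable)
      (.of_forall fun x => mul_nonneg (φ x).2 (hk x))]
    refine lintegral_congr fun x => ?_
    change _ = ENNReal.ofReal ((φ x : ℝ) * k x)
    rw [ENNReal.ofReal_mul (φ x).coe_nonneg, ENNReal.ofReal_coe_nnreal]
  rw [h1, ← h.eval_smul]
  calc ENNReal.ofReal (evalMemLp f fun x => ψ x • s x)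
      ≤ ENNReal.ofReal (‖f‖ * (eLpNorm (fun x => ψ x • s x) p m).toReal) :=
        ENNReal.ofReal_le_ofReal ((le_abs_self _).trans (abs_evalMemLp_le f hψ))
    _ = ‖f‖ₑ * eLpNorm (fun x => ψ x • s x) p m := by
        rw [ENNReal.ofReal_mul (norm_nonneg _), ofReal_norm, ENNReal.ofReal_toReal hψ.2.ne]
    _ ≤ ‖f‖ₑ * eLpNorm ψ p m := by
        gcongr
        refine eLpNorm_mono fun x => ?_
        rw [norm_smul]
        exact mul_le_of_le_one_right (norm_nonneg _) (h.norm_le x)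
    _ = _ := by
        rw [eLpNorm_eq_lintegral_rpow_enorm_toReal (zero_lt_one.trans_le Fact.out).ne' hp]
        simp [ψ]

/-- A sequence of densities of `f` in the directions of unit vectors is dominated by a function in
the dual Lebesgue space. -/
theorem exists_dominating_function (hp : p ≠ ∞) {Q : ℝ} (hpQ : p.toReal.HolderConjugate Q)
    (f : StrongDual ℝ (Lp E p m)) (k : ℕ → X → ℝ) (hk : ∀ n, ∃ s, HasDensity f s (k n))
    (hk0 : 0 ≤ k 0) :
    ∃ h : X → ℝ≥0∞, Measurable h ∧ ∫⁻ x, h x ^ Q ∂m < ∞ ∧ ∀ n x, ENNReal.ofReal (k n x) ≤ h x := by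
  let H (n : ℕ) (x : X) : ℝ := partialSups (fun i => k i x) n
  have hH (n : ℕ) : ∃ s, HasDensity f s (H n) := by
    induction n with
    | zero => simpa [H] using hk 0
    | succ n ih =>
      obtain ⟨s, hs⟩ := ih
      obtain ⟨s', hs'⟩ := hk (n + 1)
      simpa only [H, partialSups_add_one] using hs.max hs'
  have hH0 (n : ℕ) : 0 ≤ H n := fun x =>
    (hk0 x).trans (le_partialSups_of_le (fun i => k i x) (Nat.zero_le n))
  have hHm (n : ℕ) : Measurable fun x => ENNReal.ofReal (H n x) :=
    (hH n).choose_spec.measurable.ennreal_ofReal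
  refine ⟨fun x => ⨆ n, ENNReal.ofReal (H n x), .iSup hHm, ?_, fun n x => ?_⟩
  · refine (lintegral_rpow_le_of_forall_simpleFunc hpQ (C := ‖f‖ₑ) fun φ => ?_).trans_lt
      (ENNReal.rpow_lt_top_of_nonneg hpQ.symm.nonneg enorm_ne_top)
    simp only [ENNReal.mul_iSup]
    rw [lintegral_iSup fun n => show Measurable fun x => (φ x : ℝ≥0∞) * ENNReal.ofReal (H n x) from
      φ.measurable.coe_nnreal_ennreal.mul (hHm n)]
    · exact iSup_le fun n => (hH n).choose_spec.lintegral_mul_le hp (hH0 n) φ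
    · intro i j hij x
      dsimp only
      gcongr
      exact (partialSups (fun i => k i x)).monotone hij
  · exact (ENNReal.ofReal_le_ofReal (le_partialSups (fun i => k i x) n)).trans
      (le_iSup (fun n => ENNReal.ofReal (H n x)) n)

end DualOfBochner

section Representation

theorem exists_countable_dense_addSubgroup (E : Type*) [NormedAddCommGroup E]
    [TopologicalSpace.SeparableSpace E] :
    ∃ V : AddSubgroup E, Countable V ∧ Dense (V : Set E) := by
  let L : (ℕ →₀ ℤ) →+ E :=
    (Finsupp.linearCombination ℤ (TopologicalSpace.denseSeq E)).toAddMonoidHom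
  refine ⟨L.range, (Set.countable_range L).to_subtype, ?_⟩
  refine (TopologicalSpace.denseRange_denseSeq E).mono ?_
  rintro _ ⟨n, rfl⟩
  exact ⟨Finsupp.single n 1, by simp [L]⟩

variable {E : Type*} [NormedAddCommGroup E] [NormedSpace ℝ E]

/-- A bounded additive function on a dense subgroup extends to a continuous linear functional. -/
theorem exists_strongDual_extending {V : AddSubgroup E} (hV : Dense (V : Set E)) (g : V → ℝ)
    (hadd : ∀ v w, g (v + w) = g v + g w) {C : ℝ} (hC0 : 0 ≤ C) (hC : ∀ v, |g v| ≤ C * ‖v‖) :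
    ∃ r : StrongDual ℝ E, (∀ v : V, r v = g v) ∧ ‖r‖ ≤ C := by
  let g' : V →+ ℝ := AddMonoidHom.mk' g hadd
  let G : V →L[ℤ] ℝ :=
    ⟨g'.toIntLinearMap, (AddMonoidHomClass.lipschitz_of_bound g' C hC).continuous⟩
  let ι : V →L[ℤ] E := ⟨V.subtype.toIntLinearMap, continuous_subtype_val⟩
  have hd : DenseRange ι := hV.denseRange_val
  have hi : IsUniformInducing ι := ⟨rfl⟩
  have he (v : V) : G.extend ι v = g v := G.extend_eq hd hi v
  let r : StrongDual ℝ E :=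
    (G.extend ι).toLinearMap.toAddMonoidHom.toRealLinearMap (G.extend ι).continuous
  refine ⟨r, he, r.opNorm_le_bound hC0 fun x => ?_⟩
  refine hd.induction_on (p := fun x => ‖r x‖ ≤ C * ‖x‖) x
    (isClosed_le (by fun_prop) (by fun_prop)) fun v => ?_
  exact (congrArg norm (he v)).trans_le (hC v)

theorem stronglyMeasurable_strongDual_of_dense {X : Type*} [MeasurableSpace X]
    [TopologicalSpace.SeparableSpace (StrongDual ℝ E)] {V : AddSubgroup E} [Countable V]
    (hV : Dense (V : Set E)) {r : X → StrongDual ℝ E}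
    (hr : ∀ v : V, Measurable fun x => r x v) : StronglyMeasurable r := by
  borelize (StrongDual ℝ E)
  have : SecondCountableTopology (StrongDual ℝ E) :=
    UniformSpace.secondCountable_of_separable (StrongDual ℝ E)
  let J (f : StrongDual ℝ E) (v : V) : ℝ := f v
  have hJ : Continuous J :=
    continuous_pi fun v => (ContinuousLinearMap.apply ℝ ℝ (v : E)).continuous
  have hJi : Function.Injective J := fun f g h => ContinuousLinearMap.coeFn_injective <|
    Continuous.ext_on hV f.continuous g.continuous fun v hv => congrFun h ⟨v, hv⟩
  have hm := ((hJ.measurableEmbedding hJi).measurable_comp_iff (f := r)).1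
    (measurable_pi_iff.2 fun v => hr v)
  exact hm.stronglyMeasurable

variable {X : Type*} [MeasurableSpace X] {m : Measure X} [IsFiniteMeasure m]
  {p : ℝ≥0∞} [Fact (1 ≤ p)]

theorem HasDensity.of_normalize (f : StrongDual ℝ (Lp E p m)) {e : E} {k : X → ℝ}
    (hk : Measurable k) (hki : Integrable k m)
    (h : ∀ A, MeasurableSet A → evalMemLp f (A.indicator fun _ => e) = ∫ x in A, k x ∂m) :
    HasDensity f (fun _ => ‖e‖⁻¹ • e) (fun x => ‖e‖⁻¹ * k x) := by
  refine .of_const f ?_ (hk.const_mul _) (hki.const_mul _) fun A hA => ?_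
  · rw [norm_smul, norm_inv, norm_norm]
    exact inv_mul_le_one
  · rw [integral_const_mul, ← h A hA, ← evalMemLp_const_smul f (memLp_indicator_const hA e)]
    congr 1
    ext x
    by_cases hx : x ∈ A <;> simp [hx]

/-- Densities of a functional on `L^p` in countably many directions, bounded by a function of the
dual Lebesgue space. -/
theorem exists_densities (hp : p ≠ ∞) {Q : ℝ} (hpQ : p.toReal.HolderConjugate Q)
    (f : StrongDual ℝ (Lp E p m)) (V : AddSubgroup E) [Countable V] :
    ∃ (g : V → X → ℝ) (h : X → ℝ≥0∞), (∀ v, Measurable (g v)) ∧ (∀ v, Integrable (g v) m) ∧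
      (∀ v : V, ∀ A, MeasurableSet A →
        evalMemLp f (A.indicator fun _ => (v : E)) = ∫ x in A, g v x ∂m) ∧
      Measurable h ∧ ∫⁻ x, h x ^ Q ∂m < ∞ ∧
      ∀ (v : V) x, ENNReal.ofReal (‖(v : E)‖⁻¹ * g v x) ≤ h x := by
  choose g hgm hgi hg using fun v : V => exists_density hp f (v : E)
  obtain ⟨a, ha⟩ := exists_surjective_nat V
  let k : ℕ → X → ℝ
    | 0 => fun _ => 0
    | n + 1 => fun x => ‖(a n : E)‖⁻¹ * g (a n) x
  have hk (n : ℕ) : ∃ s, HasDensity f s (k n) := by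
    cases n with
    | zero =>
      refine ⟨fun _ => 0, .of_const f (by simp) measurable_const (integrable_zero _ _ _)
        fun A hA => ?_⟩
      simpa [k] using evalMemLp_zero f
    | succ n => exact ⟨_, .of_normalize f (hgm _) (hgi _) (hg _)⟩
  obtain ⟨h, hh, hh', hkh⟩ := exists_dominating_function hp hpQ f k hk le_rfl
  refine ⟨g, h, hgm, hgi, hg, hh, hh', fun v x => ?_⟩
  obtain ⟨n, rfl⟩ := ha v
  exact hkh (n + 1) x

theorem exists_strongDual_density [TopologicalSpace.SeparableSpace (StrongDual ℝ E)]
    (hp : p ≠ ∞) {Q : ℝ} (hpQ : p.toReal.HolderConjugate Q)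
    (f : StrongDual ℝ (Lp E p m)) {V : AddSubgroup E} [Countable V] (hV : Dense (V : Set E)) :
    ∃ r : X → StrongDual ℝ E, StronglyMeasurable r ∧ ∫⁻ x, ‖r x‖ₑ ^ Q ∂m < ∞ ∧
      ∀ v : V, ∀ A, MeasurableSet A →
        evalMemLp f (A.indicator fun _ => (v : E)) = ∫ x in A, r x v ∂m := by
  obtain ⟨g, h, hgm, hgi, hg, hh, hhQ, hgh⟩ := exists_densities hp hpQ f V
  have hQ := hpQ.symm.pos
  have hadd (v w : V) : ∀ᵐ x ∂m, g (v + w) x = g v x + g w x := by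
    refine Integrable.ae_eq_of_forall_setIntegral_eq _ _ (hgi _) ((hgi v).add (hgi w))
      fun A hA _ => ?_
    rw [integral_add (hgi v).integrableOn (hgi w).integrableOn, ← hg _ A hA, ← hg _ A hA,
      ← hg _ A hA, ← evalMemLp_add f (memLp_indicator_const hA _) (memLp_indicator_const hA _)]
    congr 1
    ext x
    by_cases hx : x ∈ A <;> simp [hx]
  have hfin : ∀ᵐ x ∂m, h x < ∞ := by
    filter_upwards [ae_lt_top (hh.pow_const Q) hhQ.ne] with x hx
    exact (ENNReal.rpow_lt_top_iff_of_pos hQ).1 hx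
  have hae : ∀ᵐ x ∂m, (∀ v w, g (v + w) x = g v x + g w x) ∧ h x < ∞ :=
    (ae_all_iff.2 fun v => ae_all_iff.2 fun w => hadd v w).and hfin
  obtain ⟨G, hGsub, hGm, hG0⟩ := exists_measurable_superset_of_null (ae_iff.1 hae)
  have hex (x : X) : ∃ r : StrongDual ℝ E, (∀ v : V, r v = Gᶜ.indicator (g v) x) ∧
      ‖r‖ₑ ≤ h x := by
    by_cases hx : x ∈ G
    · exact ⟨0, fun v => by simp [hx], (enorm_zero (E := StrongDual ℝ E)).trans_le bot_le⟩
    obtain ⟨hax, hhx⟩ := not_not.1 fun hn => hx (hGsub hn)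
    have hneg (v : V) : g (-v) x = - g v x := by
      have h1 := hax 0 0
      have h2 := hax v (-v)
      rw [add_neg_cancel] at h2
      rw [add_zero] at h1
      linarith
    have hle (v : V) : g v x ≤ (h x).toReal * ‖v‖ := by
      rcases eq_or_ne v 0 with rfl | hv
      · have h1 := hax 0 0
        rw [add_zero] at h1
        simp only [norm_zero, mul_zero]
        linarith
      have hv' : 0 < ‖v‖ := norm_pos_iff.2 hv
      have h1 := (ENNReal.ofReal_le_iff_le_toReal hhx.ne).1 (hgh v x)
      exact (inv_mul_le_iff₀' hv').1 h1
    have habs (v : V) : |g v x| ≤ (h x).toReal * ‖v‖ := by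
      have h1 := hle (-v)
      rw [hneg, norm_neg] at h1
      exact abs_le.2 ⟨by linarith, hle v⟩
    obtain ⟨r, hr, hrn⟩ := exists_strongDual_extending hV (fun v => g v x) hax
      ENNReal.toReal_nonneg habs
    refine ⟨r, fun v => by simp [hx, hr], ?_⟩
    rw [← ofReal_norm]
    exact (ENNReal.ofReal_le_iff_le_toReal hhx.ne).2 hrn
  choose r hr hrn using hex
  refine ⟨r, stronglyMeasurable_strongDual_of_dense hV fun v => ?_, ?_, fun v A hA => ?_⟩
  · simp only [hr]
    exact (hgm v).indicator hGm.compl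
  · exact (lintegral_mono fun x => ENNReal.rpow_le_rpow (hrn x) hQ.le).trans_lt hhQ
  · rw [hg v A hA]
    refine integral_congr_ae (ae_restrict_of_ae ?_)
    filter_upwards [compl_mem_ae_iff.2 hG0] with x hx
    rw [hr, Set.indicator_of_mem hx]

end Representation

section RieszRepresentation

variable {X : Type*} [MeasurableSpace X] {m : Measure X} [IsFiniteMeasure m]
  {E : Type*} [NormedAddCommGroup E] [NormedSpace ℝ E] {p q : ℝ≥0∞} [Fact (1 ≤ p)] [Fact (1 ≤ q)]

theorem continuous_indicatorConstLp {F : Type*} [NormedAddCommGroup F] {A : Set X}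
    (hA : MeasurableSet A) : Continuous fun c : F => indicatorConstLp p hA (measure_ne_top m A) c := by
  let L : F →+ Lp F p m := AddMonoidHom.mk' (indicatorConstLp p hA (measure_ne_top m A))
    fun _ _ => indicatorConstLp_add.symm
  refine (AddMonoidHomClass.lipschitz_of_bound L (m.real A ^ (1 / p.toReal)) fun c => ?_).continuous
  rw [mul_comm]
  exact norm_indicatorConstLp_le (hs := hA) (hμs := measure_ne_top m A)

theorem strongDual_Lp_ext_of_dense (hp : p ≠ ∞) {S : Set E} (hS : Dense S)
    {F G : StrongDual ℝ (Lp E p m)}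
    (h : ∀ c ∈ S, ∀ A, ∀ hA : MeasurableSet A, F (indicatorConstLp p hA (measure_ne_top m A) c) =
      G (indicatorConstLp p hA (measure_ne_top m A) c)) : F = G := by
  refine ContinuousLinearMap.ext fun u => ?_
  induction u using Lp.induction hp with
  | indicatorConst c hA hμ =>
    exact congrFun (Continuous.ext_on hS (F.continuous.comp (continuous_indicatorConstLp hA))
      (G.continuous.comp (continuous_indicatorConstLp hA)) fun c hc => h c hc _ hA) c
  | add hu hv _ h1 h2 => rw [map_add, map_add, h1, h2]
  | isClosed => exact isClosed_eq F.continuous G.continuous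

/-- The Riesz representation theorem for `L^p` spaces of functions with values in a space with
separable dual. -/
theorem lpPairing_surjective [TopologicalSpace.SeparableSpace (StrongDual ℝ E)]
    [q.HolderConjugate p] (hp : p ≠ ∞) (hq : q ≠ ∞) :
    Function.Surjective ((ContinuousLinearMap.id ℝ (StrongDual ℝ E)).lpPairing m q p) := by
  intro f
  have : TopologicalSpace.SeparableSpace E := separableSpace_of_separableSpace_strongDual
  obtain ⟨V, _, hV⟩ := exists_countable_dense_addSubgroup E
  have hQ : p.toReal.HolderConjugate q.toReal :=
    have : p.HolderConjugate q := .symm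
    ENNReal.HolderConjugate.toReal_of_ne_top hp hq
  obtain ⟨r, hrm, hrQ, hr⟩ := exists_strongDual_density hp hQ f hV
  have hrq : MemLp r q m :=
    ⟨hrm.aestronglyMeasurable, (eLpNorm_lt_top_iff_lintegral_rpow_enorm_lt_top
      (zero_lt_one.trans_le Fact.out).ne' hq).2 hrQ⟩
  refine ⟨hrq.toLp, strongDual_Lp_ext_of_dense hp hV fun c hc A hA => ?_⟩
  rw [ContinuousLinearMap.lpPairing_eq_integral]
  have h1 := hr ⟨c, hc⟩ A hA
  rw [evalMemLp_eq f (memLp_indicator_const hA c)] at h1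
  refine Eq.trans ?_ h1.symm
  rw [← integral_indicator hA]
  refine integral_congr_ae ?_
  filter_upwards [hrq.coeFn_toLp, indicatorConstLp_coeFn (p := p) (hs := hA)
    (hμs := measure_ne_top m A) (c := c)] with x hx hx'
  rw [hx, hx']
  by_cases hxA : x ∈ A <;> simp [hxA]

/-- If `B` is reflexive and separable, then `L^p(m; B)` is reflexive. -/
theorem surjective_inclusionInDoubleDual_Lp_of_separable [CompleteSpace E]
    [TopologicalSpace.SeparableSpace E] (h : Function.Surjective (inclusionInDoubleDual ℝ E))
    [q.HolderConjugate p] (hp : p ≠ ∞) (hq : q ≠ ∞) :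
    Function.Surjective (inclusionInDoubleDual ℝ (Lp E p m)) := by
  have : TopologicalSpace.SeparableSpace (StrongDual ℝ (StrongDual ℝ E)) :=
    h.denseRange.separableSpace (inclusionInDoubleDual ℝ E).continuous
  have : TopologicalSpace.SeparableSpace (StrongDual ℝ E) :=
    separableSpace_of_separableSpace_strongDual
  have : p.HolderConjugate q := .symm
  let e : E ≃ₗᵢ[ℝ] StrongDual ℝ (StrongDual ℝ E) :=
    LinearIsometryEquiv.ofSurjective (inclusionInDoubleDualLi ℝ) h
  have he (y : StrongDual ℝ (StrongDual ℝ E)) (b : StrongDual ℝ E) : y b = b (e.symm y) := by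
    obtain ⟨z, rfl⟩ := e.surjective y
    rw [e.symm_apply_apply]
    rfl
  intro Ψ
  let R := (ContinuousLinearMap.id ℝ (StrongDual ℝ E)).lpPairing m q p
  have hR : Function.Surjective R := lpPairing_surjective hp hq
  obtain ⟨G, hG⟩ := lpPairing_surjective (E := StrongDual ℝ E) (m := m) hq hp (Ψ.comp R)
  let T : StrongDual ℝ (StrongDual ℝ E) →L[ℝ] E := e.symm.toContinuousLinearEquiv
  refine ⟨T.compLp G, ContinuousLinearMap.ext fun f => ?_⟩
  obtain ⟨g, rfl⟩ := hR f
  have h1 : Ψ (R g) = ∫ x, G x (g x) ∂m := by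
    rw [← ContinuousLinearMap.comp_apply, ← hG, ContinuousLinearMap.lpPairing_eq_integral]
    rfl
  rw [h1, dual_def, ContinuousLinearMap.lpPairing_eq_integral]
  refine integral_congr_ae ?_
  filter_upwards [T.coeFn_compLp G] with x hx
  rw [hx, he]
  rfl

end RieszRepresentation

/-- A sequence in `L^p` takes values in a common separable closed subspace. -/
theorem exists_separable_subspace_Lp {X B : Type*} [MeasurableSpace X] {m : Measure X}
    [NormedAddCommGroup B] [NormedSpace ℝ B] {p : ℝ≥0∞} (u : ℕ → Lp B p m) :
    ∃ S : Submodule ℝ B, IsClosed (S : Set B) ∧ TopologicalSpace.SeparableSpace S ∧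
      ∃ v : ℕ → Lp S p m, ∀ n, ‖v n‖ = ‖u n‖ ∧ S.subtypeL.compLp (v n) = u n := by
  let s : Set B := ⋃ n, Set.range (u n)
  let S : Submodule ℝ B := (Submodule.span ℝ s).topologicalClosure
  have hs : TopologicalSpace.IsSeparable s :=
    .iUnion fun n => (Lp.stronglyMeasurable (u n)).isSeparable_range
  have hmem (n : ℕ) (x : X) : u n x ∈ S :=
    Submodule.le_topologicalClosure _ (Submodule.subset_span (Set.mem_iUnion.2 ⟨n, x, rfl⟩))
  refine ⟨S, Submodule.isClosed_topologicalClosure _, hs.span.closure.separableSpace, ?_⟩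
  have hv (n : ℕ) : MemLp (fun x => (⟨u n x, hmem n x⟩ : S)) p m := by
    refine (Lp.memLp (u n)).congr_norm ?_ (.of_forall fun _ => rfl)
    exact (Embedding.comp_stronglyMeasurable_iff (f := fun x => (⟨u n x, hmem n x⟩ : S))
      Topology.IsEmbedding.subtypeVal |>.1 (Lp.stronglyMeasurable (u n))).aestronglyMeasurable
  refine ⟨fun n => (hv n).toLp, fun n => ⟨?_, ?_⟩⟩
  · rw [Lp.norm_toLp, Lp.norm_def]
    rfl
  · refine Lp.ext ?_
    filter_upwards [S.subtypeL.coeFn_compLp (hv n).toLp, (hv n).coeFn_toLp] with x hx hx'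
    rw [hx, hx']
    rfl

/-- Bounded sequences in a dual space converge weak-* along ultrafilters. -/
theorem exists_tendsto_of_norm_le {F : Type*} [NormedAddCommGroup F] [NormedSpace ℝ F]
    (U : Ultrafilter ℕ) {φ : ℕ → StrongDual ℝ F} {C : ℝ} (hφ : ∀ n, ‖φ n‖ ≤ C) :
    ∃ ψ : StrongDual ℝ F, ∀ f, Filter.Tendsto (fun n => φ n f) U (nhds (ψ f)) := by
  obtain ⟨ψ, -, hψ⟩ := (WeakDual.isCompact_closedBall (𝕜 := ℝ) (E := F) 0 C).ultrafilter_le_nhds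
    (U.map fun n => StrongDual.toWeakDual (φ n))
    (Filter.le_principal_iff.2 (Filter.mem_map.2
      (Filter.univ_mem' fun n => mem_closedBall_zero_iff.2 (hφ n))))
  exact ⟨WeakDual.toStrongDual ψ, fun f => ((WeakDual.eval_continuous f).tendsto ψ).comp hψ⟩

theorem surjective_inclusionInDoubleDual_Lp {X B : Type*} [MeasurableSpace X] {m : Measure X}
    [IsFiniteMeasure m] [NormedAddCommGroup B] [NormedSpace ℝ B] [CompleteSpace B]
    (h : Function.Surjective (inclusionInDoubleDual ℝ B)) {p : ℝ≥0∞} [Fact (1 ≤ p)] (hp1 : 1 < p)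
    (hp : p ≠ ∞) : Function.Surjective (inclusionInDoubleDual ℝ (Lp B p m)) := by
  refine surjective_inclusionInDoubleDual_of_seq (Filter.hyperfilter ℕ)
    (Nat.cofinite_eq_atTop ▸ Filter.hyperfilter_le_cofinite) fun u C hu => ?_
  obtain ⟨S, hS, _, v, hv⟩ := exists_separable_subspace_Lp u
  have : CompleteSpace S := hS.completeSpace_coe
  let q := p.conjExponent
  have hpq : p.HolderConjugate q := inferInstance
  have hqp : q.HolderConjugate p := hpq.symm
  have hq : q ≠ ∞ := fun h => hp1.ne' (ENNReal.HolderConjugate.eq_top_iff_eq_one q p |>.1 h)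
  have : Fact (1 ≤ q) := ⟨ENNReal.HolderConjugate.one_le q p⟩
  obtain ⟨Ψ, hΨ⟩ := exists_tendsto_of_norm_le (Filter.hyperfilter ℕ)
    (φ := fun n => inclusionInDoubleDual ℝ (Lp S p m) (v n)) (C := C) fun n =>
      (double_dual_bound ℝ (Lp S p m) (v n)).trans ((hv n).1.trans_le (hu n))
  obtain ⟨w, rfl⟩ := surjective_inclusionInDoubleDual_Lp_of_separable (m := m)
    (Submodule.surjective_inclusionInDoubleDual h hS) hp hq Ψ
  refine ⟨S.subtypeL.compLp w, fun f => ?_⟩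
  have h1 : Filter.Tendsto (fun n => f (S.subtypeL.compLp (v n))) (Filter.hyperfilter ℕ)
    (nhds (f (S.subtypeL.compLp w))) := hΨ (f.comp (S.subtypeL.compLpL p m))
  simpa only [(hv _).2] using h1

theorem surjective_inclusionInDoubleDual_of_Lp {X B : Type*} [MeasurableSpace X] {m : Measure X}
    [IsProbabilityMeasure m] [NormedAddCommGroup B] [NormedSpace ℝ B] [CompleteSpace B] {p : ℝ≥0∞}
    [Fact (1 ≤ p)] (h : Function.Surjective (inclusionInDoubleDual ℝ (Lp B p m))) :
    Function.Surjective (inclusionInDoubleDual ℝ B) := by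
  intro φ
  let const : B →L[ℝ] Lp B p m := Lp.constL p m ℝ
  let Φ : StrongDual ℝ (StrongDual ℝ (Lp B p m)) :=
    φ.comp ((ContinuousLinearMap.compL ℝ B (Lp B p m) ℝ).flip const)
  obtain ⟨v, hv⟩ := h Φ
  have hvi : Integrable v m := (Lp.memLp v).integrable Fact.out
  refine ⟨∫ x, v x ∂m, ContinuousLinearMap.ext fun b => ?_⟩
  let q := p.conjExponent
  have hqp : q.HolderConjugate p := .symm
  have : Fact (1 ≤ q) := ⟨ENNReal.HolderConjugate.one_le q p⟩
  let Λ : StrongDual ℝ (Lp B p m) :=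
    (ContinuousLinearMap.id ℝ (StrongDual ℝ B)).lpPairing m q p (Lp.const q m b)
  have hΛ (w : Lp B p m) : Λ w = ∫ x, b (w x) ∂m := by
    refine (ContinuousLinearMap.lpPairing_eq_integral _ _ _).trans (integral_congr_ae ?_)
    filter_upwards [Lp.coeFn_const (p := q) (μ := m) (c := b)] with x hx
    rw [hx]
    rfl
  have h1 : Λ.comp const = b := by
    refine ContinuousLinearMap.ext fun e => (hΛ _).trans ?_
    have h2 : ∀ᵐ x ∂m, b (Lp.const p m e x) = b e := by
      filter_upwards [Lp.coeFn_const (p := p) (μ := m) (c := e)] with x hx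
      rw [hx]
      rfl
    refine (integral_congr_ae h2).trans ?_
    simp
  calc b (∫ x, v x ∂m) = Λ v := by rw [hΛ, b.integral_comp_comm hvi]
    _ = Φ Λ := by rw [← hv]; rfl
    _ = φ (Λ.comp const) := rfl
    _ = φ b := by rw [h1]

/-- A Banach space `B` is reflexive if and only if the Lebesgue–Bochner space `L^p(m;B)` over a
probability space is reflexive for every `p ∈ (1,∞)` (reflexivity expressed via surjectivity
of the canonical inclusion into the double dual). -/
theorem reflexive_iff_reflexive_Lp
    {X B : Type*} [MeasurableSpace X] (m : Measure X) [IsProbabilityMeasure m]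
    [NormedAddCommGroup B] [NormedSpace ℝ B] [CompleteSpace B] :
    Function.Surjective (inclusionInDoubleDual ℝ B) ↔
      ∀ (p : ℝ≥0∞) (_ : Fact (1 ≤ p)), 1 < p → p ≠ ∞ →
        Function.Surjective (inclusionInDoubleDual ℝ (Lp B p m)) := by
  refine ⟨fun h p _ hp1 hp => surjective_inclusionInDoubleDual_Lp h hp1 hp, fun h => ?_⟩
  have h2 : Fact ((1 : ℝ≥0∞) ≤ 2) := ⟨one_le_two⟩
  exact surjective_inclusionInDoubleDual_of_Lp (m := m)
    (h 2 h2 ENNReal.one_lt_two ENNReal.ofNat_ne_top)
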